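/- Fix integers 1 ≤ m ≤ n and suppose E_Q[r̄(X₁)²] < ∞. Let Z₁,…,Z_m be i.i.d. with distribution P and α_φ := P(φ_m(Z₁,…,Z_m) = 1). Define V(n,m) := C(n,m)^{−1}·Σ_{ℓ=1}^{m} C(m,ℓ)·C(n−m, m−ℓ)·(E_Q[r̄(X₁)²]^ℓ − 1), where C(a,b) denotes the binomial coefficient, equal to 0 when b > a. Then for every δ ∈ (0,1), E_Q[c(n,m)/d(n,m)] ≤ α_φ/(1−δ) + V(n,m)/(V(n,m) + δ²); consequently the rejection probability of the DRPL resampling test at sample size n is at most inf_{δ∈(0,1)} (α_φ/(1−δ) + V(n,m)/(V(n,m) + δ²)). -/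

import Mathlib

open MeasureTheory Filter Topology
open scoped ENNReal

/-- `dStat r n m x` is the normalizing statistic
`d(n,m) = ((n-m)!/n!) · Σ_{(j₁,…,j_m) distinct} ∏_ℓ r̄(x_{j_ℓ})`,
the sum ranging over all `m`-tuples of pairwise distinct indices in `{1,…,n}`. -/
noncomputable def dStat {𝒳 : Type*} (r : 𝒳 → ℝ) (n m : ℕ) (x : Fin n → 𝒳) : ℝ :=
  ((n - m).factorial : ℝ) / (n.factorial : ℝ) *
    ∑ i ∈ Finset.univ.filter (fun i : Fin m → Fin n => Function.Injective i),
      ∏ ℓ, r (x (i ℓ))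

/-- `cStat r A n m x` is the numerator statistic
`c(n,m) = ((n-m)!/n!) · Σ_{(i₁,…,i_m) distinct} (∏_ℓ r̄(x_{i_ℓ})) · 1{(x_{i₁},…,x_{i_m}) ∈ A m}`,
where `A m` is the acceptance region `{φ_m = 1}` of the test `φ_m`. -/
noncomputable def cStat {𝒳 : Type*} (r : 𝒳 → ℝ) (A : ∀ k : ℕ, Set (Fin k → 𝒳))
    (n m : ℕ) (x : Fin n → 𝒳) : ℝ :=
  ((n - m).factorial : ℝ) / (n.factorial : ℝ) *
    ∑ i ∈ Finset.univ.filter (fun i : Fin m → Fin n => Function.Injective i),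
      (∏ ℓ, r (x (i ℓ))) * (A m).indicator (fun _ => (1 : ℝ)) (fun ℓ => x (i ℓ))


lemma fiber_card (n m : ℕ) (S : Finset (Fin n)) (hS : S.card = m) :
    ((Finset.univ.filter (fun i : Fin m → Fin n => Function.Injective i)).filter
      (fun i => Finset.univ.image i = S)).card = m.factorial := by
  classical
  have h1 : Fintype.card (Fin m ≃ S) = m.factorial := by
    have e : Fin m ≃ S := Fintype.equivOfCardEq (by simp [hS])
    rw [Fintype.card_equiv e, Fintype.card_fin]
  rw [← h1, ← Finset.card_univ]
  symm
  refine Finset.card_bij (fun e _ => fun l => ((e l : S) : Fin n)) ?_ ?_ ?_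
  · intro e _
    simp only [Finset.mem_filter, Finset.mem_univ, true_and]
    refine ⟨fun a b h => e.injective (Subtype.ext h), ?_⟩
    ext j
    simp only [Finset.mem_image, Finset.mem_univ, true_and]
    constructor
    · rintro ⟨l, rfl⟩
      exact (e l).2
    · intro hj
      exact ⟨e.symm ⟨j, hj⟩, by simp⟩
  · intro e _ f _ h
    ext l
    exact congrArg Fin.val (congrFun h l)
  · intro i hi
    simp only [Finset.mem_filter, Finset.mem_univ, true_and] at hi
    obtain ⟨hi, rfl⟩ := hi
    refine ⟨Equiv.ofBijective (fun l => ⟨i l, by simp⟩) ⟨?_, ?_⟩, by simp, ?_⟩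
    · intro a b h
      exact hi (by simpa using h)
    · rintro ⟨j, hj⟩
      simpa using hj
    · rfl

lemma sum_inj (n m : ℕ) (f : Fin n → ℝ) :
    ∑ i ∈ Finset.univ.filter (fun i : Fin m → Fin n => Function.Injective i), ∏ l, f (i l)
      = m.factorial * ∑ S ∈ Finset.univ.powersetCard m, ∏ j ∈ S, f j := by
  classical
  rw [← Finset.sum_fiberwise_of_maps_to (g := fun i : Fin m → Fin n => Finset.univ.image i)
    (t := Finset.univ.powersetCard m), Finset.mul_sum]
  · refine Finset.sum_congr rfl fun S hS => ?_
    rw [Finset.mem_powersetCard] at hS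
    rw [← fiber_card n m S hS.2, ← nsmul_eq_mul, ← Finset.sum_const]
    refine Finset.sum_congr rfl fun i hi => ?_
    simp only [Finset.mem_filter, Finset.mem_univ, true_and] at hi
    rw [← hi.2, Finset.prod_image (fun a _ b _ h => hi.1 h)]
  · intro i hi
    simp only [Finset.mem_filter, Finset.mem_univ, true_and] at hi
    simp [Finset.mem_powersetCard, Finset.card_image_of_injective _ hi]

lemma inter_card (n m l : ℕ) (hl : l ≤ m) (S : Finset (Fin n)) (hS : S.card = m) :
    ((Finset.univ.powersetCard m).filter (fun T => (S ∩ T).card = l)).card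
      = m.choose l * (n - m).choose (m - l) := by
  classical
  have : m.choose l * (n - m).choose (m - l)
      = (S.powersetCard l ×ˢ Sᶜ.powersetCard (m - l)).card := by
    rw [Finset.card_product, Finset.card_powersetCard, Finset.card_powersetCard,
      Finset.card_compl, hS, Fintype.card_fin]
  rw [this]
  have key : ∀ a b : Finset (Fin n), a ⊆ S → b ⊆ Sᶜ → S ∩ (a ∪ b) = a ∧ Sᶜ ∩ (a ∪ b) = b := by
    intro a b ha hb
    constructor
    · ext j
      have := @ha j
      have := @hb j
      simp only [Finset.mem_inter, Finset.mem_union, Finset.mem_compl] at *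
      tauto
    · ext j
      have := @ha j
      have := @hb j
      simp only [Finset.mem_inter, Finset.mem_union, Finset.mem_compl] at *
      tauto
  have key2 : ∀ T : Finset (Fin n), (S ∩ T) ∪ (Sᶜ ∩ T) = T := by
    intro T
    rw [← Finset.union_inter_distrib_right, Finset.union_compl, Finset.univ_inter]
  have key3 : ∀ T : Finset (Fin n), (S ∩ T).card + (Sᶜ ∩ T).card = T.card := by
    intro T
    rw [← Finset.card_union_of_disjoint, key2]
    exact disjoint_compl_right.mono Finset.inter_subset_left Finset.inter_subset_left
  refine Finset.card_bij' (fun T _ => (S ∩ T, Sᶜ ∩ T)) (fun p _ => p.1 ∪ p.2) ?_ ?_ ?_ ?_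
  · intro T hT
    simp only [Finset.mem_filter, Finset.mem_powersetCard, Finset.mem_product] at hT ⊢
    have := key3 T
    refine ⟨⟨Finset.inter_subset_left, hT.2⟩, Finset.inter_subset_left, by omega⟩
  · rintro ⟨a, b⟩ hp
    simp only [Finset.mem_filter, Finset.mem_powersetCard, Finset.mem_product] at hp ⊢
    obtain ⟨k1, k2⟩ := key a b hp.1.1 hp.2.1
    have := key3 (a ∪ b)
    rw [k1, k2] at this
    refine ⟨⟨Finset.subset_univ _, by omega⟩, by rw [k1]; exact hp.1.2⟩
  · intro T _
    exact key2 T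
  · rintro ⟨a, b⟩ hp
    simp only [Finset.mem_powersetCard, Finset.mem_product] at hp
    obtain ⟨k1, k2⟩ := key a b hp.1.1 hp.2.1
    simp [k1, k2]

lemma sum_inter (n m : ℕ) (ρ : ℝ) (S : Finset (Fin n)) (hS : S.card = m) :
    ∑ T ∈ Finset.univ.powersetCard m, ρ ^ (S ∩ T).card
      = ∑ l ∈ Finset.range (m + 1), (m.choose l : ℝ) * ((n - m).choose (m - l) : ℝ) * ρ ^ l := by
  classical
  rw [← Finset.sum_fiberwise_of_maps_to (g := fun T : Finset (Fin n) => (S ∩ T).card)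
    (t := Finset.range (m + 1))]
  · refine Finset.sum_congr rfl fun l hl => ?_
    rw [Finset.mem_range] at hl
    have := inter_card n m l (by omega) S hS
    rw [← Nat.cast_mul, ← this, ← nsmul_eq_mul, ← Finset.sum_const]
    refine Finset.sum_congr rfl fun T hT => ?_
    rw [(Finset.mem_filter.1 hT).2]
  · intro T _
    have := Finset.card_le_card (Finset.inter_subset_left : S ∩ T ⊆ S)
    rw [Finset.mem_range]; omega

lemma sum_inter' (n m : ℕ) (hmn : m ≤ n) (ρ : ℝ) :
    ∑ l ∈ Finset.range (m + 1), (m.choose l : ℝ) * ((n - m).choose (m - l) : ℝ) * ρ ^ l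
     = n.choose m + ∑ l ∈ Finset.Icc 1 m, (m.choose l : ℝ) * ((n - m).choose (m - l) : ℝ) *
      (ρ ^ l - 1) := by
  have h1 : (n.choose m : ℝ) = ∑ l ∈ Finset.range (m + 1),
      (m.choose l : ℝ) * ((n - m).choose (m - l) : ℝ) := by
    have : n = m + (n - m) := by omega
    conv_lhs => rw [this, Nat.add_choose_eq, Finset.Nat.sum_antidiagonal_eq_sum_range_succ_mk]
    push_cast
    rfl
  have h2 : ∑ l ∈ Finset.Icc 1 m, (m.choose l : ℝ) * ((n - m).choose (m - l) : ℝ) *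
      (ρ ^ l - 1) = ∑ l ∈ Finset.range (m + 1), (m.choose l : ℝ) * ((n - m).choose (m - l) : ℝ) *
      (ρ ^ l - 1) := by
    refine Finset.sum_subset ?_ ?_
    · intro l hl
      rw [Finset.mem_Icc] at hl
      rw [Finset.mem_range]
      omega
    · intro l h h'
      have : l = 0 := by simp at h h'; omega
      simp [this]
  rw [h1, h2, ← Finset.sum_add_distrib]
  exact Finset.sum_congr rfl fun l _ => by ring

lemma pi_wd {𝒳 : Type*} [MeasurableSpace 𝒳] (Q P : Measure 𝒳) [IsProbabilityMeasure Q]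
    [IsProbabilityMeasure P] (f : 𝒳 → ℝ≥0∞) (hf : Measurable f) (hP : P = Q.withDensity f) (m : ℕ) :
    (Measure.pi fun _ : Fin m => P)
      = (Measure.pi fun _ : Fin m => Q).withDensity (fun y => ∏ l, f (y l)) := by
  refine Measure.pi_eq fun s hs => ?_
  rw [withDensity_apply _ (MeasurableSet.univ_pi hs), ← lintegral_indicator (MeasurableSet.univ_pi hs)]
  have h1 : ∀ y : Fin m → 𝒳, (Set.univ.pi s).indicator (fun y => ∏ l, f (y l)) y
      = ∏ l, (s l).indicator f (y l) := by
    intro y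
    by_cases h : y ∈ Set.univ.pi s
    · rw [Set.indicator_of_mem h]
      exact Finset.prod_congr rfl fun l _ => (Set.indicator_of_mem (h l trivial) f).symm
    · rw [Set.indicator_of_notMem h]
      simp only [Set.mem_pi, Set.mem_univ, true_imp_iff, not_forall] at h
      obtain ⟨l, hl⟩ := h
      exact (Finset.prod_eq_zero (Finset.mem_univ l) (Set.indicator_of_notMem hl f)).symm
  simp_rw [h1]
  have hind := ProbabilityTheory.iIndepFun_pi (μ := fun _ : Fin m => Q)
    (X := fun l => (s l).indicator f) (fun l => (hf.indicator (hs l)).aemeasurable)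
  rw [ProbabilityTheory.lintegral_prod_eq_prod_lintegral_of_indepFun Finset.univ
    (fun l (y : Fin m → 𝒳) => (s l).indicator f (y l)) hind
    (fun l => (hf.indicator (hs l)).comp (measurable_pi_apply l))]
  refine Finset.prod_congr rfl fun l _ => ?_
  rw [(measurePreserving_eval (fun _ : Fin m => Q) l).lintegral_comp (hf.indicator (hs l)),
    lintegral_indicator (hs l), hP, withDensity_apply _ (hs l)]

lemma mp_inj {𝒳 : Type*} [MeasurableSpace 𝒳] (Q : Measure 𝒳) [IsProbabilityMeasure Q]
    (n m : ℕ) (i : Fin m → Fin n) (hi : Function.Injective i) :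
    MeasurePreserving (fun (x : Fin n → 𝒳) l => x (i l)) (Measure.pi fun _ : Fin n => Q)
      (Measure.pi fun _ : Fin m => Q) := by
  refine ⟨by fun_prop, ?_⟩
  have h0 := ProbabilityTheory.iIndepFun_pi (μ := fun _ : Fin n => Q)
    (X := fun _ => (id : 𝒳 → 𝒳)) (fun _ => aemeasurable_id)
  have h := h0.precomp hi
  have h2 := (ProbabilityTheory.iIndepFun_iff_map_fun_eq_pi_map
    (fun l => (measurable_pi_apply (i l)).aemeasurable)).1 h
  refine h2.trans ?_
  congr 1
  ext1 l
  exact (measurePreserving_eval (fun _ : Fin n => Q) (i l)).map_eq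

lemma fac_ratio (n m : ℕ) (hmn : m ≤ n) :
    ((n - m).factorial : ℝ) / (n.factorial : ℝ) * m.factorial = (n.choose m : ℝ)⁻¹ := by
  rw [Nat.cast_choose ℝ hmn]
  have h1 : ((n - m).factorial : ℝ) ≠ 0 := by positivity
  have h2 : (n.factorial : ℝ) ≠ 0 := by positivity
  have h3 : (m.factorial : ℝ) ≠ 0 := by positivity
  field_simp

lemma dStat_eq {𝒳 : Type*} (r : 𝒳 → ℝ) (n m : ℕ) (hmn : m ≤ n) (x : Fin n → 𝒳) :
    dStat r n m x = (n.choose m : ℝ)⁻¹ * ∑ S ∈ Finset.univ.powersetCard m, ∏ j ∈ S, r (x j) := by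
  rw [dStat, sum_inj n m (fun j => r (x j)), ← mul_assoc, fac_ratio n m hmn]

lemma cStat_univ {𝒳 : Type*} (r : 𝒳 → ℝ) (n m : ℕ) (x : Fin n → 𝒳) :
    cStat r (fun _ => Set.univ) n m x = dStat r n m x := by
  simp [cStat, dStat]

lemma inj_count (n m : ℕ) (hmn : m ≤ n) :
    ((n - m).factorial : ℝ) / (n.factorial : ℝ) *
     ((Finset.univ.filter (fun i : Fin m → Fin n => Function.Injective i)).card : ℝ) = 1 := by
  have h := sum_inj n m (fun _ => 1)
  simp only [Finset.prod_const_one, Finset.sum_const, Finset.card_powersetCard, Finset.card_univ,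
    Fintype.card_fin, nsmul_eq_mul, mul_one] at h
  rw [h, ← mul_assoc, fac_ratio n m hmn]
  have : (0 : ℝ) < n.choose m := by exact_mod_cast Nat.choose_pos hmn
  exact inv_mul_cancel₀ this.ne'

section
variable {𝒳 : Type*} [MeasurableSpace 𝒳] (Q : Measure 𝒳) [IsProbabilityMeasure Q]

lemma r_int (r : 𝒳 → ℝ) (hr1 : ∫ x, r x ∂Q = 1) : Integrable r Q := by
  by_contra h
  rw [integral_undef h] at hr1
  exact zero_ne_one hr1

lemma term_int (r : 𝒳 → ℝ) (hr1 : ∫ x, r x ∂Q = 1) (m : ℕ) (B : Set (Fin m → 𝒳))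
    (hB : MeasurableSet B) :
    Integrable (fun y : Fin m → 𝒳 => (∏ l, r (y l)) * B.indicator (fun _ => (1 : ℝ)) y)
      (Measure.pi fun _ : Fin m => Q) := by
  have h1 : Integrable (fun y : Fin m → 𝒳 => ∏ l, r (y l)) (Measure.pi fun _ : Fin m => Q) :=
    Integrable.fintype_prod (fun _ => r_int Q r hr1)
  have h2 := h1.indicator hB
  refine h2.congr (Eventually.of_forall fun y => ?_)
  by_cases h : y ∈ B <;> simp [h]

lemma term_val (r : 𝒳 → ℝ) (hr : Measurable r) (hr0 : ∀ x, 0 ≤ r x)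
    (P : Measure 𝒳) [IsProbabilityMeasure P]
    (hP : P = Q.withDensity fun x => ENNReal.ofReal (r x)) (m : ℕ) (B : Set (Fin m → 𝒳))
    (hB : MeasurableSet B) :
    ∫ y : Fin m → 𝒳, (∏ l, r (y l)) * B.indicator (fun _ => (1 : ℝ)) y
      ∂(Measure.pi fun _ : Fin m => Q) = ((Measure.pi fun _ : Fin m => P) B).toReal := by
  rw [pi_wd Q P _ hr.ennreal_ofReal hP m, withDensity_apply _ hB]
  have h1 : ∀ y : Fin m → 𝒳, (∏ l, r (y l)) * B.indicator (fun _ => (1 : ℝ)) y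
      = B.indicator (fun y => ∏ l, r (y l)) y := by
    intro y
    by_cases h : y ∈ B <;> simp [h]
  simp_rw [h1]
  rw [integral_indicator hB, integral_eq_lintegral_of_nonneg_ae
    (Eventually.of_forall fun y => Finset.prod_nonneg fun l _ => hr0 _)]
  · congr 1
    refine lintegral_congr fun y => ?_
    exact ENNReal.ofReal_prod_of_nonneg fun l _ => hr0 _
  · exact (Finset.measurable_prod _ fun l _ => hr.comp (measurable_pi_apply l)).aestronglyMeasurable

lemma cStat_integral (r : 𝒳 → ℝ) (hr : Measurable r) (hr0 : ∀ x, 0 ≤ r x)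
    (hr1 : ∫ x, r x ∂Q = 1)
    (P : Measure 𝒳) [IsProbabilityMeasure P]
    (hP : P = Q.withDensity fun x => ENNReal.ofReal (r x))
    (A : ∀ k : ℕ, Set (Fin k → 𝒳)) (hA : ∀ k, MeasurableSet (A k))
    (n m : ℕ) (hmn : m ≤ n) :
    Integrable (cStat r A n m) (Measure.pi fun _ : Fin n => Q) ∧
    ∫ x, cStat r A n m x ∂(Measure.pi fun _ : Fin n => Q)
      = ((Measure.pi fun _ : Fin m => P) (A m)).toReal := by
  have hi : ∀ i ∈ Finset.univ.filter (fun i : Fin m → Fin n => Function.Injective i),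
      Integrable (fun x : Fin n → 𝒳 => (∏ l, r (x (i l))) *
        (A m).indicator (fun _ => (1 : ℝ)) (fun l => x (i l))) (Measure.pi fun _ : Fin n => Q) := by
    intro i hi
    exact (mp_inj Q n m i (Finset.mem_filter.1 hi).2).integrable_comp_of_integrable
      (term_int Q r hr1 m (A m) (hA m))
  constructor
  · exact (integrable_finsetSum _ hi).const_mul _
  · simp only [cStat]
    rw [integral_const_mul, integral_finsetSum _ hi]
    have : ∀ i ∈ Finset.univ.filter (fun i : Fin m → Fin n => Function.Injective i),
      ∫ x : Fin n → 𝒳, (∏ l, r (x (i l))) *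
        (A m).indicator (fun _ => (1 : ℝ)) (fun l => x (i l)) ∂(Measure.pi fun _ : Fin n => Q)
        = ((Measure.pi fun _ : Fin m => P) (A m)).toReal := by
      intro i hi
      have mp := mp_inj Q n m i (Finset.mem_filter.1 hi).2
      rw [← term_val Q r hr hr0 P hP m (A m) (hA m), ← mp.map_eq, integral_map]
      · exact mp.measurable.aemeasurable
      · rw [mp.map_eq]
        exact (term_int Q r hr1 m (A m) (hA m)).aestronglyMeasurable
    rw [Finset.sum_congr rfl this, Finset.sum_const, nsmul_eq_mul, ← mul_assoc, inj_count n m hmn,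
      one_mul]

lemma pair_integral (r : 𝒳 → ℝ) (hr1 : ∫ x, r x ∂Q = 1) (hr2 : Integrable (fun x => r x ^ 2) Q)
    (n : ℕ) (S T : Finset (Fin n)) :
    Integrable (fun x : Fin n → 𝒳 => (∏ j ∈ S, r (x j)) * ∏ j ∈ T, r (x j))
      (Measure.pi fun _ : Fin n => Q) ∧
    ∫ x : Fin n → 𝒳, (∏ j ∈ S, r (x j)) * ∏ j ∈ T, r (x j) ∂(Measure.pi fun _ : Fin n => Q)
      = (∫ x, r x ^ 2 ∂Q) ^ (S ∩ T).card := by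
  classical
  have h1 : ∀ x : Fin n → 𝒳, (∏ j ∈ S, r (x j)) * ∏ j ∈ T, r (x j)
      = ∏ j, (fun y => (if j ∈ S then r y else 1) * (if j ∈ T then r y else 1)) (x j) := by
    intro x
    simp only
    rw [Finset.prod_mul_distrib]
    congr 1 <;> simp
  simp_rw [h1]
  have hri := r_int Q r hr1
  constructor
  · refine Integrable.fintype_prod (f := fun j y => (if j ∈ S then r y else 1) * (if j ∈ T then r y else 1)) fun j => ?_
    by_cases hS : j ∈ S <;> by_cases hT : j ∈ T <;> simp only [hS, hT, if_true, if_false, mul_one, one_mul]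
    · simpa [sq] using hr2
    · exact hri
    · exact hri
    · exact integrable_const _
  · rw [integral_fintype_prod_eq_prod
      (fun j y => (if j ∈ S then r y else 1) * (if j ∈ T then r y else 1)),
      ← Finset.prod_const, ← Finset.prod_subset (Finset.subset_univ (S ∩ T))]
    · refine Finset.prod_congr rfl fun j hj => ?_
      rw [Finset.mem_inter] at hj
      simp [hj.1, hj.2, sq]
    · intro j _ hj
      rw [Finset.mem_inter] at hj
      by_cases hS : j ∈ S <;> by_cases hT : j ∈ T <;> simp_all

lemma dStat_sq (r : 𝒳 → ℝ) (hr1 : ∫ x, r x ∂Q = 1) (hr2 : Integrable (fun x => r x ^ 2) Q)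
    (n m : ℕ) (hmn : m ≤ n) :
    Integrable (fun x => dStat r n m x ^ 2) (Measure.pi fun _ : Fin n => Q) ∧
    ∫ x, dStat r n m x ^ 2 ∂(Measure.pi fun _ : Fin n => Q)
      = 1 + (n.choose m : ℝ)⁻¹ * ∑ ℓ ∈ Finset.Icc 1 m,
                (m.choose ℓ : ℝ) * ((n - m).choose (m - ℓ) : ℝ) *
                  ((∫ x, r x ^ 2 ∂Q) ^ ℓ - 1) := by
  classical
  have hC : (n.choose m : ℝ) ≠ 0 := by exact_mod_cast (Nat.choose_pos hmn).ne'
  have h1 : ∀ x : Fin n → 𝒳, dStat r n m x ^ 2 = ((n.choose m : ℝ)⁻¹) ^ 2 *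
      ∑ S ∈ Finset.univ.powersetCard m, ∑ T ∈ Finset.univ.powersetCard m,
        (∏ j ∈ S, r (x j)) * ∏ j ∈ T, r (x j) := by
    intro x
    rw [dStat_eq r n m hmn, mul_pow, ← Finset.sum_mul_sum, sq (∑ S ∈ _, _)]
  have hp := pair_integral Q r hr1 hr2 n
  simp_rw [h1]
  constructor
  · exact (integrable_finsetSum _ fun S _ => integrable_finsetSum _ fun T _ =>
      (hp S T).1).const_mul _
  · rw [integral_const_mul, integral_finsetSum _ (fun S _ => integrable_finsetSum _ fun T _ =>
      (hp S T).1)]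
    have : ∀ S ∈ Finset.univ.powersetCard m, ∫ x : Fin n → 𝒳, ∑ T ∈ Finset.univ.powersetCard m,
        (∏ j ∈ S, r (x j)) * ∏ j ∈ T, r (x j) ∂(Measure.pi fun _ : Fin n => Q)
        = n.choose m + ∑ l ∈ Finset.Icc 1 m, (m.choose l : ℝ) * ((n - m).choose (m - l) : ℝ) *
      ((∫ x, r x ^ 2 ∂Q) ^ l - 1) := by
      intro S hS
      rw [integral_finsetSum _ (fun T _ => (hp S T).1), ← sum_inter' n m hmn,
        ← sum_inter n m _ S (Finset.mem_powersetCard.1 hS).2]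
      exact Finset.sum_congr rfl fun T _ => (hp S T).2
    rw [Finset.sum_congr rfl this, Finset.sum_const, Finset.card_powersetCard, Finset.card_univ,
      Fintype.card_fin, nsmul_eq_mul]
    field_simp

end

lemma cantelli_pt (c d δ t : ℝ) (hc : 0 ≤ c) (hcd : c ≤ d) (hδ : 0 < δ) (hδ1 : δ < 1)
    (ht : 0 ≤ t) : c / d ≤ c / (1 - δ) + ((1 + t) - d) ^ 2 / (δ + t) ^ 2 := by
  by_cases h : 1 - δ ≤ d
  · have h1 : c / d ≤ c / (1 - δ) := div_le_div_of_nonneg_left hc (by linarith) h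
    have h2 : 0 ≤ ((1 + t) - d) ^ 2 / (δ + t) ^ 2 := by positivity
    linarith
  · push Not at h
    have h1 : c / d ≤ 1 := div_le_one_of_le₀ hcd (hc.trans hcd)
    have h2 : 1 ≤ ((1 + t) - d) ^ 2 / (δ + t) ^ 2 := by
      rw [one_le_div (by positivity)]
      exact pow_le_pow_left₀ (by positivity) (by linarith) 2
    have h3 : 0 ≤ c / (1 - δ) := div_nonneg hc (by linarith)
    linarith

lemma drpl_main {𝒳 : Type*} [MeasurableSpace 𝒳]
    (Q : Measure 𝒳) [IsProbabilityMeasure Q]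
    (r : 𝒳 → ℝ) (hr : Measurable r) (hr0 : ∀ x, 0 ≤ r x)
    (hr1 : ∫ x, r x ∂Q = 1)
    (P : Measure 𝒳) [IsProbabilityMeasure P]
    (hP : P = Q.withDensity fun x => ENNReal.ofReal (r x))
    (A : ∀ k : ℕ, Set (Fin k → 𝒳)) (hA : ∀ k, MeasurableSet (A k))
    (n m : ℕ) (hmn : m ≤ n)
    (hr2 : Integrable (fun x => r x ^ 2) Q) (δ V : ℝ) (hδ : δ ∈ Set.Ioo (0 : ℝ) 1)
    (hV : V = (n.choose m : ℝ)⁻¹ * ∑ ℓ ∈ Finset.Icc 1 m,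
                (m.choose ℓ : ℝ) * ((n - m).choose (m - ℓ) : ℝ) *
                  ((∫ x, r x ^ 2 ∂Q) ^ ℓ - 1)) :
    ∫ x, cStat r A n m x / dStat r n m x ∂(Measure.pi fun _ : Fin n => Q)
        ≤ ((Measure.pi fun _ : Fin m => P) (A m)).toReal / (1 - δ) + V / (V + δ ^ 2) := by
  obtain ⟨hδ0, hδ1⟩ := hδ
  obtain ⟨ci, cv⟩ := cStat_integral Q r hr hr0 hr1 P hP A hA n m hmn
  obtain ⟨di, dv⟩ := cStat_integral Q r hr hr0 hr1 P hP (fun _ => Set.univ)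
    (fun _ => MeasurableSet.univ) n m hmn
  obtain ⟨si, sv⟩ := dStat_sq Q r hr1 hr2 n m hmn
  rw [← hV] at sv
  have e : cStat r (fun _ => Set.univ) n m = dStat r n m := funext (cStat_univ r n m)
  rw [e] at di dv
  simp only [measure_univ, ENNReal.toReal_one] at dv
  have qe : ∀ (a : ℝ) (x : Fin n → 𝒳), (a - dStat r n m x) ^ 2
      = a ^ 2 - 2 * a * dStat r n m x + dStat r n m x ^ 2 := fun a x => by ring
  have qi : ∀ a : ℝ, Integrable (fun x => (a - dStat r n m x) ^ 2)
      (Measure.pi fun _ : Fin n => Q) := by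
    intro a
    simp_rw [qe]
    exact ((integrable_const _).sub (di.const_mul _)).add si
  have qv : ∀ a : ℝ, ∫ x, (a - dStat r n m x) ^ 2 ∂(Measure.pi fun _ : Fin n => Q)
      = a ^ 2 - 2 * a + (1 + V) := by
    intro a
    simp_rw [qe]
    have hs : Integrable (fun x => a ^ 2 - 2 * a * dStat r n m x)
        (Measure.pi fun _ : Fin n => Q) := (integrable_const _).sub (di.const_mul _)
    rw [integral_add hs si,
      integral_sub (integrable_const _) (di.const_mul _), integral_const_mul, dv, sv]
    simp
  have hV0 : 0 ≤ V := by
    have h := qv 1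
    have h2 : 0 ≤ ∫ x, (1 - dStat r n m x) ^ 2 ∂(Measure.pi fun _ : Fin n => Q) :=
      integral_nonneg fun x => sq_nonneg _
    linarith
  have hc0 : ∀ x, 0 ≤ cStat r A n m x := by
    intro x
    refine mul_nonneg (by positivity) (Finset.sum_nonneg fun i _ => mul_nonneg
      (Finset.prod_nonneg fun l _ => hr0 _) (Set.indicator_nonneg (fun _ _ => zero_le_one) _))
  have hcd : ∀ x, cStat r A n m x ≤ dStat r n m x := by
    intro x
    refine mul_le_mul_of_nonneg_left (Finset.sum_le_sum fun i _ => ?_) (by positivity)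
    refine mul_le_of_le_one_right (Finset.prod_nonneg fun l _ => hr0 _) ?_
    exact Set.indicator_le_self' (fun _ _ => zero_le_one) _
  set t := V / δ with htd
  have ht : 0 ≤ t := div_nonneg hV0 hδ0.le
  calc ∫ x, cStat r A n m x / dStat r n m x ∂(Measure.pi fun _ : Fin n => Q)
      ≤ ∫ x, (cStat r A n m x / (1 - δ) + ((1 + t) - dStat r n m x) ^ 2 / (δ + t) ^ 2)
          ∂(Measure.pi fun _ : Fin n => Q) := by
        refine integral_mono_of_nonneg (Eventually.of_forall fun x => ?_) ?_
          (Eventually.of_forall fun x => ?_)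
        · exact div_nonneg (hc0 x) ((hc0 x).trans (hcd x))
        · exact (ci.div_const _).add ((qi _).div_const _)
        · exact cantelli_pt _ _ _ _ (hc0 x) (hcd x) hδ0 hδ1 ht
    _ = ((Measure.pi fun _ : Fin m => P) (A m)).toReal / (1 - δ) + V / (V + δ ^ 2) := by
        rw [integral_add (ci.div_const _) ((qi _).div_const _), integral_div, integral_div, cv, qv]
        congr 1
        have h1 : V + δ ^ 2 ≠ 0 := by positivity
        have h2 : δ + t ≠ 0 := by positivity
        have h3 : V = t * δ := by rw [htd]; field_simp
        rw [div_eq_div_iff (by positivity) h1, h3]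
        ring

/-- **Finite-sample level of the DRPL resampling test.** Fix `1 ≤ m ≤ n` and suppose
`E_Q[r̄(X₁)²] < ∞`. Let `α_φ := P^⊗m(A m)` be the rejection probability of `φ_m` under
i.i.d. target data and set
`V(n,m) := C(n,m)⁻¹ · Σ_{ℓ=1}^m C(m,ℓ)·C(n−m,m−ℓ)·(E_Q[r̄(X₁)²]^ℓ − 1)`.
Then for every `δ ∈ (0,1)` the rejection probability `E_Q[c(n,m)/d(n,m)]` of the DRPL
resampling test is at most `α_φ/(1−δ) + V(n,m)/(V(n,m)+δ²)`; consequently it is at most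
the infimum of this bound over `δ ∈ (0,1)`. -/
theorem drpl_finite_sample_level
    {𝒳 : Type*} [MeasurableSpace 𝒳]
    (μ : Measure 𝒳) [SigmaFinite μ]
    (q : 𝒳 → ℝ≥0∞) (hq : Measurable q)
    (Q : Measure 𝒳) [IsProbabilityMeasure Q] (hQ : Q = μ.withDensity q)
    (r : 𝒳 → ℝ) (hr : Measurable r) (hr0 : ∀ x, 0 ≤ r x)
    (hr1 : ∫ x, r x ∂Q = 1)
    (P : Measure 𝒳) [IsProbabilityMeasure P]
    (hP : P = μ.withDensity fun x => ENNReal.ofReal (r x) * q x)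
    (A : ∀ k : ℕ, Set (Fin k → 𝒳)) (hA : ∀ k, MeasurableSet (A k))
    (n m : ℕ) (hm1 : 1 ≤ m) (hmn : m ≤ n)
    (hr2 : Integrable (fun x => r x ^ 2) Q) :
    (∀ δ ∈ Set.Ioo (0 : ℝ) 1,
      ∫ x, cStat r A n m x / dStat r n m x ∂(Measure.pi fun _ : Fin n => Q)
        ≤ ((Measure.pi fun _ : Fin m => P) (A m)).toReal / (1 - δ) +
            ((n.choose m : ℝ)⁻¹ * ∑ ℓ ∈ Finset.Icc 1 m,
                (m.choose ℓ : ℝ) * ((n - m).choose (m - ℓ) : ℝ) *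
                  ((∫ x, r x ^ 2 ∂Q) ^ ℓ - 1)) /
              ((n.choose m : ℝ)⁻¹ * ∑ ℓ ∈ Finset.Icc 1 m,
                (m.choose ℓ : ℝ) * ((n - m).choose (m - ℓ) : ℝ) *
                  ((∫ x, r x ^ 2 ∂Q) ^ ℓ - 1) + δ ^ 2))
    ∧
    ∫ x, cStat r A n m x / dStat r n m x ∂(Measure.pi fun _ : Fin n => Q)
      ≤ ⨅ δ : Set.Ioo (0 : ℝ) 1,
          (((Measure.pi fun _ : Fin m => P) (A m)).toReal / (1 - (δ : ℝ)) +
            ((n.choose m : ℝ)⁻¹ * ∑ ℓ ∈ Finset.Icc 1 m,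
                (m.choose ℓ : ℝ) * ((n - m).choose (m - ℓ) : ℝ) *
                  ((∫ x, r x ^ 2 ∂Q) ^ ℓ - 1)) /
              ((n.choose m : ℝ)⁻¹ * ∑ ℓ ∈ Finset.Icc 1 m,
                (m.choose ℓ : ℝ) * ((n - m).choose (m - ℓ) : ℝ) *
                  ((∫ x, r x ^ 2 ∂Q) ^ ℓ - 1) + (δ : ℝ) ^ 2)) := by
  have hP' : P = Q.withDensity fun x => ENNReal.ofReal (r x) := by
    rw [hP, hQ, ← withDensity_mul _ hq hr.ennreal_ofReal]
    congr 1
    ext x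
    simp [mul_comm]
  have main := fun δ hδ => drpl_main Q r hr hr0 hr1 P hP' A hA n m hmn hr2 δ _ hδ rfl
  refine ⟨main, ?_⟩
  have : Nonempty (Set.Ioo (0 : ℝ) 1) := ⟨⟨1 / 2, by norm_num, by norm_num⟩⟩
  exact le_ciInf fun δ => main δ.1 δ.2
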